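/- Let $0<p\le 1$ and $-1<\alpha,\beta<\infty$. If the Toeplitz operator $T_{\mu,\beta}:L^p_a(\omega_\alpha)\to L^1_a(\omega_\beta)$ is bounded, then $\mu$ is a $(1/p)$-Carleson measure for $L^1_a(\omega_\alpha)$, i.e. for each $r\in(0,1)$, $\sup_{z\in\mathbb{D}}\mu(D(z,r))/(1-|z|^2)^{(\alpha+2)/p}<\infty$. -/

import Mathlib

/-!
A lower bound for the Toeplitz operator comes from testing it on `f(w) = w ^ m * (1 - z̄ w) ^ (-c)`
with `c = 2 + b + m`. The `m`-th derivative of `T f` at the same point `z` is a positive constant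
times `∫ |w| ^ (2m) |1 - z w̄| ^ (-2c) dμ(w)`, because differentiating the kernel `m` times yields
`w̄ ^ m * (1 - z w̄) ^ (-c)`, the conjugate of `f` (`iteratedDeriv_integral_kernel`,
`kernel_mul_conj_kernel`).

That derivative is at most a constant times `(1 - |z|²) ^ (-c)` times the `L¹` norm of `T f`
(`iteratedDeriv_le_wnorm`, from a Cauchy estimate integrated over a disk), and boundedness of the
operator replaces the latter by the `L^p` quasi-norm of `f`. For `m` so large that
`c p ≥ 4 + 2a`, the quasi-norm of `f` is at most a constant times `(1 - |z|²) ^ ((a + 2) / p - c)`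
(`forelli_rudin`, by a Möbius change of variables). The operator is only assumed bounded on
polynomials, so `(1 - z̄ w) ^ (-c)` is first approximated uniformly on the disk by a polynomial
(`exists_polynomial_approx`). Altogether the positive integral is at most
`K (1 - |z|²) ^ ((a + 2) / p - 2c)` (`kernel_integral_bound`).

On `D(z, r)` one has `|1 - z̄ w| ≤ (1 - |z|²) / (1 - r)`, and `|w| ≥ 1/2` when `z` is near the
boundary, so the integrand there is at least a constant times `(1 - |z|²) ^ (-2c)`; Markov's
inequality gives the bound for `μ (D(z, r))`. For `z` in a compact part of the disk the bound
follows from `μ` being finite.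
-/

open MeasureTheory Metric Filter Complex Set
open scoped ENNReal NNReal Topology

/-- The normalized area measure on `ℂ`. -/
noncomputable def dA : Measure ℂ := (ENNReal.ofReal Real.pi)⁻¹ • volume

/-- The standard weight `ω_a(z) = (1+a)(1-|z|²)^a`. -/
noncomputable def stdW (a : ℝ) (z : ℂ) : ℝ := (1 + a) * (1 - ‖z‖ ^ 2) ^ a

/-- The weighted `L^p` (quasi-)norm over the unit disk. -/
noncomputable def wnorm (p a : ℝ) (f : ℂ → ℂ) : ℝ≥0∞ :=
  (∫⁻ z in ball (0 : ℂ) 1, ENNReal.ofReal (‖f z‖ ^ p * stdW a z) ∂dA) ^ (1 / p)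

/-- The pseudohyperbolic disk `D(z,r)`. -/
def pD (z : ℂ) (r : ℝ) : Set ℂ :=
  {w | w ∈ ball (0 : ℂ) 1 ∧ ‖(z - w) / (1 - (starRingEnd ℂ) z * w)‖ < r}

/-- The Toeplitz operator `T_{μ,b}`. -/
noncomputable def Toep (μ : Measure ℂ) (b : ℝ) (f : ℂ → ℂ) (z : ℂ) : ℂ :=
  ∫ w in ball (0 : ℂ) 1, f w / (1 - z * (starRingEnd ℂ) w) ^ (((2 + b : ℝ)) : ℂ) ∂μ

/-- The Bloch norm. -/
noncomputable def blochNorm (g : ℂ → ℂ) : ℝ :=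
  ‖g 0‖ + sSup ((fun z => (1 - ‖z‖ ^ 2) * ‖deriv g z‖) '' ball (0 : ℂ) 1)

/-- Membership in the Bloch space. -/
def MemBloch (g : ℂ → ℂ) : Prop :=
  DifferentiableOn ℂ g (ball (0 : ℂ) 1) ∧
    BddAbove ((fun z => (1 - ‖z‖ ^ 2) * ‖deriv g z‖) '' ball (0 : ℂ) 1)

/-! ### Kernel integrals and their derivatives -/

lemma one_sub_mul_conj_re_pos {z w : ℂ} (hz : ‖z‖ ≤ 1) (hw : ‖w‖ < 1) :
    0 < (1 - z * (starRingEnd ℂ) w).re := by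
  have h1 : (z * (starRingEnd ℂ) w).re ≤ ‖z‖ * ‖w‖ := by
    simpa using Complex.re_le_norm (z * (starRingEnd ℂ) w)
  have h2 : ‖z‖ * ‖w‖ < 1 := by
    nlinarith [norm_nonneg z, norm_nonneg w]
  simp only [sub_re, one_re]
  linarith

lemma one_sub_norm_le {z w : ℂ} (hw : ‖w‖ ≤ 1) :
    1 - ‖z‖ ≤ ‖1 - z * (starRingEnd ℂ) w‖ := by
  have h := norm_sub_norm_le (1 : ℂ) (z * (starRingEnd ℂ) w)
  have h2 : ‖z * (starRingEnd ℂ) w‖ ≤ ‖z‖ := by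
    rw [norm_mul, RCLike.norm_conj]
    exact mul_le_of_le_one_right (norm_nonneg _) hw
  rw [norm_one] at h
  linarith

lemma hasDerivAt_kernel (s : ℂ) {z w : ℂ} (hz : ‖z‖ ≤ 1) (hw : ‖w‖ < 1) :
    HasDerivAt (fun ζ : ℂ => (1 - ζ * (starRingEnd ℂ) w) ^ (-s))
      (s * (starRingEnd ℂ) w * (1 - z * (starRingEnd ℂ) w) ^ (-(s + 1))) z := by
  have h0 : HasDerivAt (fun ζ : ℂ => 1 - ζ * (starRingEnd ℂ) w) (-(starRingEnd ℂ) w) z := by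
    simpa using ((hasDerivAt_id z).mul_const ((starRingEnd ℂ) w)).const_sub 1
  have h := h0.cpow_const (c := -s)
    (Or.inl (one_sub_mul_conj_re_pos hz hw))
  refine h.congr_deriv ?_
  rw [show -s - 1 = -(s + 1) by ring]
  ring

lemma measurable_kernel (s z : ℂ) :
    Measurable fun w : ℂ => (1 - z * (starRingEnd ℂ) w) ^ s := by
  have h1 : Measurable fun w : ℂ => 1 - z * (starRingEnd ℂ) w := by
    have : Continuous fun w : ℂ => 1 - z * (starRingEnd ℂ) w := by fun_prop
    exact this.measurable
  exact h1.pow_const s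

/-- On the disk `‖z‖ ≤ 1 - ε` the kernel is bounded uniformly in `w`; this is the domination used
to differentiate under the integral sign. -/
lemma norm_kernel_le {s : ℝ} (hs : 0 ≤ s) {z w : ℂ} {ε : ℝ} (hε : 0 < ε) (hz : ‖z‖ ≤ 1 - ε)
    (hw : ‖w‖ ≤ 1) : ‖(1 - z * (starRingEnd ℂ) w) ^ (-(s : ℂ))‖ ≤ ε ^ (-s) := by
  rw [← ofReal_neg, Complex.norm_cpow_real]
  refine Real.rpow_le_rpow_of_nonpos hε ?_ (by linarith)
  have := one_sub_norm_le (z := z) hw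
  linarith

lemma integrable_kernel (μ : Measure ℂ) [IsFiniteMeasure μ] {h : ℂ → ℂ} (hm : Measurable h)
    {M : ℝ} (hM : ∀ w ∈ ball (0 : ℂ) 1, ‖h w‖ ≤ M) {s : ℝ} (hs : 0 ≤ s) {z : ℂ}
    (hz : ‖z‖ < 1) :
    IntegrableOn (fun w => h w * (1 - z * (starRingEnd ℂ) w) ^ (-(s : ℂ))) (ball 0 1) μ := by
  refine Integrable.of_bound ((hm.mul (measurable_kernel _ z)).aestronglyMeasurable)
    (M * (1 - ‖z‖) ^ (-s)) ?_
  filter_upwards [ae_restrict_mem measurableSet_ball] with w hw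
  have hw' : ‖w‖ < 1 := by simpa using hw
  rw [norm_mul]
  exact mul_le_mul (hM w hw) (norm_kernel_le hs (by linarith) (by linarith) hw'.le)
    (norm_nonneg _) ((norm_nonneg _).trans (hM w hw))

lemma hasDerivAt_integral_kernel (μ : Measure ℂ) [IsFiniteMeasure μ] {h : ℂ → ℂ}
    (hm : Measurable h) {M : ℝ} (hM : ∀ w ∈ ball (0 : ℂ) 1, ‖h w‖ ≤ M) {s : ℝ} (hs : 0 ≤ s)
    {z : ℂ} (hz : ‖z‖ < 1) :
    HasDerivAt
      (fun ζ => ∫ w in ball (0 : ℂ) 1, h w * (1 - ζ * (starRingEnd ℂ) w) ^ (-(s : ℂ)) ∂μ)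
      (s * ∫ w in ball (0 : ℂ) 1,
        (h w * (starRingEnd ℂ) w) * (1 - z * (starRingEnd ℂ) w) ^ (-((s + 1 : ℝ) : ℂ)) ∂μ) z := by
  set ε : ℝ := (1 - ‖z‖) / 2 with hε
  have hε0 : 0 < ε := by rw [hε]; linarith
  have hball : ∀ ζ ∈ ball z ε, ‖ζ‖ ≤ 1 - ε := by
    intro ζ hζ
    have h1 : ‖ζ - z‖ < ε := by simpa [dist_eq_norm] using hζ
    have h2 := norm_sub_norm_le ζ z
    linarith
  have key := hasDerivAt_integral_of_dominated_loc_of_deriv_le (𝕜 := ℂ)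
    (μ := μ.restrict (ball (0 : ℂ) 1))
    (F := fun ζ w => h w * (1 - ζ * (starRingEnd ℂ) w) ^ (-(s : ℂ)))
    (F' := fun ζ w => h w * (s * (starRingEnd ℂ) w *
      (1 - ζ * (starRingEnd ℂ) w) ^ (-((s : ℂ) + 1))))
    (bound := fun _ => M * (s * 1 * ε ^ (-(s + 1)))) (x₀ := z) (ball_mem_nhds z hε0)
    (Eventually.of_forall fun ζ => (hm.mul (measurable_kernel _ ζ)).aestronglyMeasurable)
    (integrable_kernel μ hm hM hs hz)
    ((hm.mul ((Complex.continuous_conj.measurable.const_mul _).mul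
      (measurable_kernel _ z))).aestronglyMeasurable)
    ?_ (integrable_const _) ?_
  · refine key.2.congr_deriv ?_
    rw [← integral_const_mul]
    congr 1
    funext w
    push_cast
    ring
  · filter_upwards [ae_restrict_mem measurableSet_ball] with w hw ζ hζ
    have hw' : ‖w‖ < 1 := by simpa using hw
    have hk := norm_kernel_le (s := s + 1) (by linarith) hε0 (hball ζ hζ) hw'.le
    push_cast at hk
    rw [norm_mul, norm_mul, norm_mul, RCLike.norm_conj, Complex.norm_real, Real.norm_of_nonneg hs]
    have hM0 : 0 ≤ M := (norm_nonneg _).trans (hM w hw)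
    have := hM w hw
    gcongr
  · filter_upwards [ae_restrict_mem measurableSet_ball] with w hw ζ hζ
    have hw' : ‖w‖ < 1 := by simpa using hw
    exact (hasDerivAt_kernel s (by linarith [hball ζ hζ]) hw').const_mul _

/-- Differentiating `m` times in `z` turns the kernel exponent `s` into `s + m`, with a positive
rising-factorial constant and an extra factor `w̄ ^ m` in the density. -/
lemma iteratedDeriv_integral_kernel (μ : Measure ℂ) [IsFiniteMeasure μ] {h : ℂ → ℂ}
    (hm : Measurable h) {M : ℝ} (hM : ∀ w ∈ ball (0 : ℂ) 1, ‖h w‖ ≤ M) {s : ℝ} (hs : 0 ≤ s)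
    (m : ℕ) {z : ℂ} (hz : ‖z‖ < 1) :
    iteratedDeriv m
      (fun ζ => ∫ w in ball (0 : ℂ) 1, h w * (1 - ζ * (starRingEnd ℂ) w) ^ (-(s : ℂ)) ∂μ) z =
      ((∏ i ∈ Finset.range m, (s + i) : ℝ) : ℂ) * ∫ w in ball (0 : ℂ) 1,
        (h w * (starRingEnd ℂ) w ^ m) *
          (1 - z * (starRingEnd ℂ) w) ^ (-((s + m : ℝ) : ℂ)) ∂μ := by
  induction m generalizing z with
  | zero => simp
  | succ m ih =>
    rw [iteratedDeriv_succ]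
    have hev : iteratedDeriv m
        (fun ζ => ∫ w in ball (0 : ℂ) 1, h w * (1 - ζ * (starRingEnd ℂ) w) ^ (-(s : ℂ)) ∂μ)
        =ᶠ[𝓝 z] fun ζ => ((∏ i ∈ Finset.range m, (s + i) : ℝ) : ℂ) * ∫ w in ball (0 : ℂ) 1,
        (h w * (starRingEnd ℂ) w ^ m) *
          (1 - ζ * (starRingEnd ℂ) w) ^ (-((s + m : ℝ) : ℂ)) ∂μ := by
      filter_upwards [isOpen_ball.mem_nhds (show z ∈ ball (0 : ℂ) 1 by simpa using hz)] with ζ hζ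
      exact ih (by simpa using hζ)
    rw [hev.deriv_eq]
    have hd := hasDerivAt_integral_kernel μ (h := fun w => h w * (starRingEnd ℂ) w ^ m)
      (hm.mul (Complex.continuous_conj.measurable.pow_const _)) (M := M) (fun w hw => by
        have hw' : ‖w‖ < 1 := by simpa using hw
        rw [norm_mul, norm_pow, RCLike.norm_conj]
        exact (mul_le_of_le_one_right (norm_nonneg _) (pow_le_one₀ (norm_nonneg _) hw'.le)).trans
          (hM w hw)) (s := s + m) (by positivity) hz
    rw [(hd.const_mul _).deriv, Finset.prod_range_succ]
    push_cast
    rw [← mul_assoc]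
    congr 1
    congr 1
    funext w
    rw [pow_succ, ← mul_assoc, add_assoc]

/-! ### Cauchy estimates in `L¹` -/

/-- Cauchy estimate on the circle of radius `ρ`, bounding by the `L¹` mean of `F` rather than by its
supremum. -/
lemma circle_cauchy_estimate {F : ℂ → ℂ} {z : ℂ} {R ρ : ℝ} (hF : DifferentiableOn ℂ F (ball z R))
    (hρ : 0 < ρ) (hρR : ρ < R) (m : ℕ) :
    ENNReal.ofReal (ρ ^ m) * ‖iteratedDeriv m F z‖ₑ ≤ ENNReal.ofReal (m.factorial / (2 * Real.pi)) *
      ∫⁻ θ in Ioo (-Real.pi) Real.pi, ‖F (circleMap z ρ θ)‖ₑ := by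
  have h1 := (hF.mono (closedBall_subset_ball hρR)).circleIntegral_one_div_sub_center_pow_smul hρ m
  -- The circle integral runs over `[0, 2π]`; polar coordinates use `(-π, π)`, hence the shift.
  have hper : Function.Periodic (fun θ => deriv (circleMap z ρ) θ •
      ((1 / (circleMap z ρ θ - z) ^ (m + 1)) • F (circleMap z ρ θ))) (2 * Real.pi) := by
    intro θ
    simp only [deriv_circleMap, periodic_circleMap _ _ θ]
  have h2 : (∮ ζ in C(z, ρ), (1 / (ζ - z) ^ (m + 1)) • F ζ) =
      ∫ θ in (-Real.pi)..Real.pi, deriv (circleMap z ρ) θ •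
      ((1 / (circleMap z ρ θ - z) ^ (m + 1)) • F (circleMap z ρ θ)) := by
    have := hper.intervalIntegral_add_eq 0 (-Real.pi)
    rw [zero_add, show -Real.pi + 2 * Real.pi = Real.pi by ring] at this
    exact this
  have h3 : ‖(2 * Real.pi * I / m.factorial : ℂ) • iteratedDeriv m F z‖ₑ ≤
      ∫⁻ θ in Ioo (-Real.pi) Real.pi, ENNReal.ofReal ((ρ ^ m)⁻¹) * ‖F (circleMap z ρ θ)‖ₑ := by
    rw [← h1, h2, intervalIntegral.integral_of_le (by linarith [Real.pi_pos]),
      integral_Ioc_eq_integral_Ioo]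
    refine (enorm_integral_le_lintegral_enorm _).trans (le_of_eq ?_)
    refine lintegral_congr fun θ => ?_
    rw [enorm_smul, enorm_smul, ← mul_assoc, ← enorm_mul]
    congr 1
    rw [← ofReal_norm]
    congr 1
    have : ρ ≠ 0 := hρ.ne'
    simp [abs_of_pos hρ]
    field_simp
    ring
  rw [lintegral_const_mul' _ _ ENNReal.ofReal_ne_top] at h3
  have e : ‖iteratedDeriv m F z‖ₑ = ENNReal.ofReal (m.factorial / (2 * Real.pi)) *
      ‖(2 * Real.pi * I / m.factorial : ℂ) • iteratedDeriv m F z‖ₑ := by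
    rw [← ofReal_norm, ← ofReal_norm, ← ENNReal.ofReal_mul (by positivity)]
    congr 1
    have := Real.pi_pos
    have h5 : (m.factorial : ℝ) ≠ 0 := by positivity
    simp [abs_of_pos Real.pi_pos]
    field_simp
  rw [e]
  calc _ ≤ ENNReal.ofReal (ρ ^ m) * (ENNReal.ofReal (m.factorial / (2 * Real.pi)) *
      (ENNReal.ofReal ((ρ ^ m)⁻¹) * ∫⁻ θ in Ioo (-Real.pi) Real.pi, ‖F (circleMap z ρ θ)‖ₑ)) := by
        gcongr
    _ = (ENNReal.ofReal (ρ ^ m) * ENNReal.ofReal ((ρ ^ m)⁻¹)) *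
      (ENNReal.ofReal (m.factorial / (2 * Real.pi)) *
        ∫⁻ θ in Ioo (-Real.pi) Real.pi, ‖F (circleMap z ρ θ)‖ₑ) := by ring
    _ = _ := by
        rw [← ENNReal.ofReal_mul (by positivity), mul_inv_cancel₀ (by positivity),
          ENNReal.ofReal_one, one_mul]

/-- Cauchy estimate against area measure: the circle estimates, multiplied by `ρ` and integrated
over `0 < ρ < R` in polar coordinates centred at `z`. -/
lemma area_cauchy_estimate {F : ℂ → ℂ} {z : ℂ} {R : ℝ} (hR : 0 < R)
    (hF : DifferentiableOn ℂ F (ball z R)) (m : ℕ) :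
    ENNReal.ofReal (R ^ (m + 2) / (m + 2)) * ‖iteratedDeriv m F z‖ₑ ≤
      ENNReal.ofReal (m.factorial / (2 * Real.pi)) * ∫⁻ ζ in ball z R, ‖F ζ‖ₑ := by
  -- Extending `‖F‖` by zero gives a globally measurable function, to which translation invariance
  -- and the polar coordinate formula apply.
  set G : ℂ → ℝ≥0∞ := (ball z R).indicator fun ζ => ‖F ζ‖ₑ with hG
  have hGm : Measurable G := by
    classical
    have hc : ContinuousOn (fun ζ => ‖F ζ‖ₑ) (ball z R) := hF.continuousOn.enorm
    rw [hG, ← Set.piecewise_eq_indicator]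
    exact hc.measurable_piecewise continuousOn_const measurableSet_ball
  have hpol : ∫⁻ ζ in ball z R, ‖F ζ‖ₑ = ∫⁻ ρ in Ioi (0 : ℝ), ENNReal.ofReal ρ *
      ∫⁻ θ in Ioo (-Real.pi) Real.pi, G (circleMap z ρ θ) := by
    rw [← lintegral_indicator measurableSet_ball, ← hG,
      ← lintegral_add_left_eq_self G z, ← Complex.lintegral_comp_polarCoord_symm,
      show polarCoord.target = Ioi (0 : ℝ) ×ˢ Ioo (-Real.pi) Real.pi from rfl,
      Measure.volume_eq_prod, ← Measure.prod_restrict,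
      lintegral_prod]
    · refine lintegral_congr fun ρ => ?_
      rw [← lintegral_const_mul' _ _ ENNReal.ofReal_ne_top]
      refine lintegral_congr fun θ => ?_
      simp [circleMap, Complex.exp_mul_I]
    · refine Measurable.aemeasurable ?_
      simp only [Complex.polarCoord_symm_apply]
      refine Measurable.mul (by fun_prop) (hGm.comp (by fun_prop))
  have hL : ENNReal.ofReal (R ^ (m + 2) / (m + 2)) =
      ∫⁻ ρ in Ioo 0 R, ENNReal.ofReal (ρ ^ (m + 1)) := by
    rw [← ofReal_integral_eq_lintegral_ofReal, ← integral_Ioc_eq_integral_Ioo,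
      ← intervalIntegral.integral_of_le hR.le, integral_pow]
    · congr 1
      push_cast
      simp
      ring
    · exact ((continuous_pow (m + 1)).integrableOn_Icc (a := 0) (b := R)).mono_set
        Ioo_subset_Icc_self
    · filter_upwards [ae_restrict_mem measurableSet_Ioo] with ρ hρ
      have := hρ.1.le
      positivity
  rw [hL, ← lintegral_mul_const _ (by fun_prop), hpol,
    ← lintegral_const_mul' _ _ ENNReal.ofReal_ne_top]
  refine le_trans ?_ (lintegral_mono_set Ioo_subset_Ioi_self (s := Ioo 0 R))
  refine setLIntegral_mono' measurableSet_Ioo fun ρ hρ => ?_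
  have h := circle_cauchy_estimate hF hρ.1 hρ.2 m
  have e : ∀ θ, G (circleMap z ρ θ) = ‖F (circleMap z ρ θ)‖ₑ := by
    intro θ
    rw [hG, indicator_of_mem]
    simp [circleMap, abs_of_pos hρ.1, hρ.2]
  simp only [e]
  rw [pow_succ', ENNReal.ofReal_mul hρ.1.le, mul_assoc]
  calc _ ≤ ENNReal.ofReal ρ * (ENNReal.ofReal (m.factorial / (2 * Real.pi)) *
      ∫⁻ θ in Ioo (-Real.pi) Real.pi, ‖F (circleMap z ρ θ)‖ₑ) := by gcongr
    _ = _ := by ring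

/-! ### Derivatives and the weighted norm -/

lemma enorm_le_of_ofReal_mul_le {A B : ℝ} {N W : ℝ≥0∞} (hA : 0 < A)
    (h : ENNReal.ofReal A * N ≤ ENNReal.ofReal B * W) : N ≤ ENNReal.ofReal (B / A) * W := by
  calc N = ENNReal.ofReal A⁻¹ * (ENNReal.ofReal A * N) := by
        rw [← mul_assoc, ← ENNReal.ofReal_mul (by positivity), inv_mul_cancel₀ hA.ne',
          ENNReal.ofReal_one, one_mul]
    _ ≤ ENNReal.ofReal A⁻¹ * (ENNReal.ofReal B * W) := by gcongr
    _ = _ := by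
        rw [← mul_assoc, ← ENNReal.ofReal_mul (by positivity), div_eq_inv_mul]

/-- If `x` is comparable to `d` then `x ^ b` is bounded below by a multiple of `d ^ b`, for either
sign of `b`. -/
lemma min_rpow_mul_le {b d x : ℝ} (hd : 0 < d) (h1 : d / 2 ≤ x) (h2 : x ≤ 3 * d) :
    min ((1 / 2 : ℝ) ^ b) (3 ^ b) * d ^ b ≤ x ^ b := by
  rcases le_total 0 b with hb | hb
  · calc _ ≤ (1 / 2 : ℝ) ^ b * d ^ b := by gcongr; exact min_le_left _ _
      _ = (d / 2) ^ b := by rw [← Real.mul_rpow (by norm_num) hd.le]; congr 1; ring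
      _ ≤ _ := Real.rpow_le_rpow (by linarith) h1 hb
  · calc _ ≤ (3 : ℝ) ^ b * d ^ b := by gcongr; exact min_le_right _ _
      _ = (3 * d) ^ b := by rw [← Real.mul_rpow (by norm_num) hd.le]
      _ ≤ _ := Real.rpow_le_rpow_of_nonpos (by linarith) h2 hb

/-- Point evaluation of the `m`-th derivative on the weighted Bergman space `L¹`: the area Cauchy
estimate on the disk of radius `(1 - ‖z‖) / 2` about `z`, where the weight is comparable to
`(1 - ‖z‖) ^ b`. -/
lemma iteratedDeriv_le_wnorm {b : ℝ} (hb : -1 < b) (m : ℕ) :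
    ∃ C : ℝ, 0 < C ∧ ∀ F : ℂ → ℂ, DifferentiableOn ℂ F (ball 0 1) → ∀ z ∈ ball (0 : ℂ) 1,
      ‖iteratedDeriv m F z‖ₑ ≤
        ENNReal.ofReal (C * (1 - ‖z‖ ^ 2) ^ (-(2 + b + m))) * wnorm 1 b F := by
  set κ : ℝ := (1 + b) * min ((1 / 2 : ℝ) ^ b) (3 ^ b) with hκ
  have hκ0 : 0 < κ := mul_pos (by linarith) (lt_min (by positivity) (by positivity))
  set x : ℝ := 2 + b + m with hx
  have hx0 : 0 < x := by have : (0 : ℝ) ≤ m := Nat.cast_nonneg m; rw [hx]; linarith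
  refine ⟨m.factorial / 2 * (m + 2) * 2 ^ (m + 2) / κ * 2 ^ x, by positivity, ?_⟩
  intro F hF z hz
  have hz' : ‖z‖ < 1 := by simpa using hz
  set d : ℝ := 1 - ‖z‖ with hd
  have hd0 : 0 < d := by rw [hd]; linarith
  have hsub : ball z (d / 2) ⊆ ball 0 1 := by
    refine ball_subset_ball' ?_
    rw [dist_zero_right]; linarith
  have h1 := area_cauchy_estimate (half_pos hd0) (hF.mono hsub) m
  have h2 : ENNReal.ofReal (κ * d ^ b) * ∫⁻ ζ in ball z (d / 2), ‖F ζ‖ₑ ≤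
      ENNReal.ofReal Real.pi * wnorm 1 b F := by
    have hW : ENNReal.ofReal Real.pi * wnorm 1 b F =
        ∫⁻ ζ in ball (0 : ℂ) 1, ENNReal.ofReal (‖F ζ‖ ^ (1 : ℝ) * stdW b ζ) := by
      rw [wnorm, dA, Measure.restrict_smul, lintegral_smul_measure, div_one, ENNReal.rpow_one,
        smul_eq_mul, ← mul_assoc, ENNReal.mul_inv_cancel (by simpa using Real.pi_pos)
        ENNReal.ofReal_ne_top, one_mul]
    rw [hW, ← lintegral_const_mul' _ _ ENNReal.ofReal_ne_top]
    refine le_trans ?_ (lintegral_mono_set hsub)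
    refine setLIntegral_mono' measurableSet_ball fun ζ hζ => ?_
    have h3 : ‖ζ - z‖ < d / 2 := by simpa [dist_eq_norm] using hζ
    have h4 := norm_sub_norm_le ζ z
    have h5 := norm_sub_norm_le z ζ
    rw [norm_sub_rev] at h5
    have h6 := norm_nonneg ζ
    have h7 := norm_nonneg z
    have h8 := min_rpow_mul_le (b := b) (x := 1 - ‖ζ‖ ^ 2) hd0 (by nlinarith) (by nlinarith)
    rw [← ofReal_norm, ← ENNReal.ofReal_mul (by positivity), Real.rpow_one, mul_comm, stdW, hκ,
      mul_assoc]
    gcongr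
    linarith
  have h3 : ENNReal.ofReal ((d / 2) ^ (m + 2) / (m + 2) * (κ * d ^ b)) * ‖iteratedDeriv m F z‖ₑ ≤
      ENNReal.ofReal (m.factorial / 2) * wnorm 1 b F := by
    calc _ = ENNReal.ofReal (κ * d ^ b) *
          (ENNReal.ofReal ((d / 2) ^ (m + 2) / (m + 2)) * ‖iteratedDeriv m F z‖ₑ) := by
          rw [ENNReal.ofReal_mul (by positivity)]; ring
      _ ≤ ENNReal.ofReal (κ * d ^ b) * (ENNReal.ofReal (m.factorial / (2 * Real.pi)) *
          ∫⁻ ζ in ball z (d / 2), ‖F ζ‖ₑ) := by gcongr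
      _ = ENNReal.ofReal (m.factorial / (2 * Real.pi)) * (ENNReal.ofReal (κ * d ^ b) *
          ∫⁻ ζ in ball z (d / 2), ‖F ζ‖ₑ) := by ring
      _ ≤ ENNReal.ofReal (m.factorial / (2 * Real.pi)) *
          (ENNReal.ofReal Real.pi * wnorm 1 b F) := by gcongr
      _ = _ := by
          rw [← mul_assoc, ← ENNReal.ofReal_mul (by positivity)]
          congr 2
          have := Real.pi_ne_zero
          field_simp
  refine (enorm_le_of_ofReal_mul_le (by positivity) h3).trans ?_
  gcongr
  have h4 : (1 - ‖z‖ ^ 2) / 2 ≤ d := by nlinarith [norm_nonneg z]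
  have h40 : 0 < 1 - ‖z‖ ^ 2 := by nlinarith [norm_nonneg z]
  have h5 : d ^ (-x) ≤ 2 ^ x * (1 - ‖z‖ ^ 2) ^ (-x) := by
    calc d ^ (-x) ≤ ((1 - ‖z‖ ^ 2) / 2) ^ (-x) :=
          Real.rpow_le_rpow_of_nonpos (by linarith) h4 (by linarith)
      _ = _ := by
          rw [Real.div_rpow h40.le (by norm_num), Real.rpow_neg (by norm_num : (0 : ℝ) ≤ 2)]
          field_simp
  have h6 : d ^ (-x) = (d ^ (m + 2) * d ^ b)⁻¹ := by
    rw [Real.rpow_neg hd0.le, hx, ← Real.rpow_natCast, ← Real.rpow_add hd0]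
    push_cast
    congr 2
    ring
  calc (m.factorial : ℝ) / 2 / ((d / 2) ^ (m + 2) / (m + 2) * (κ * d ^ b))
      = m.factorial / 2 * (m + 2) * 2 ^ (m + 2) / κ * d ^ (-x) := by
        rw [h6, div_pow]; field_simp
    _ ≤ m.factorial / 2 * (m + 2) * 2 ^ (m + 2) / κ * (2 ^ x * (1 - ‖z‖ ^ 2) ^ (-x)) := by gcongr
    _ = _ := by ring

/-! ### Disk automorphisms and the Forelli–Rudin estimate -/

/-- The involutive disk automorphism `u ↦ (z - u) / (1 - z̄ u)`, exchanging `0` and `z`. -/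
noncomputable def moeb (z u : ℂ) : ℂ := (z - u) / (1 - (starRingEnd ℂ) z * u)

lemma one_sub_conj_mul_ne_zero {z u : ℂ} (hz : ‖z‖ < 1) (hu : ‖u‖ < 1) :
    1 - (starRingEnd ℂ) z * u ≠ 0 := by
  intro h
  have h1 : (starRingEnd ℂ) z * u = 1 := (sub_eq_zero.mp h).symm
  have h2 : ‖z‖ * ‖u‖ = 1 := by simpa using congrArg norm h1
  nlinarith [norm_nonneg z, norm_nonneg u]

lemma one_sub_normSq_moeb {z u : ℂ} (hz : ‖z‖ < 1) (hu : ‖u‖ < 1) :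
    1 - ‖moeb z u‖ ^ 2 =
      (1 - ‖z‖ ^ 2) * (1 - ‖u‖ ^ 2) / ‖1 - (starRingEnd ℂ) z * u‖ ^ 2 := by
  have h := norm_pos_iff.mpr (one_sub_conj_mul_ne_zero hz hu)
  rw [moeb, norm_div, div_pow, eq_div_iff (by positivity), sub_mul,
    div_mul_cancel₀ _ (by positivity)]
  simp only [← Complex.normSq_eq_norm_sq, Complex.normSq_apply]
  simp
  ring

lemma one_sub_conj_mul_moeb {z u : ℂ} (hz : ‖z‖ < 1) (hu : ‖u‖ < 1) :
    1 - (starRingEnd ℂ) z * moeb z u =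
      ((1 - ‖z‖ ^ 2 : ℝ) : ℂ) / (1 - (starRingEnd ℂ) z * u) := by
  have h := one_sub_conj_mul_ne_zero hz hu
  have h2 : (starRingEnd ℂ) z * z = ((‖z‖ ^ 2 : ℝ) : ℂ) := by
    rw [Complex.conj_mul']; push_cast; rfl
  rw [moeb]
  field_simp
  push_cast at h2 ⊢
  linear_combination -h2

lemma one_sub_sq_pos {z : ℂ} (hz : ‖z‖ < 1) : 0 < 1 - ‖z‖ ^ 2 := by
  nlinarith [norm_nonneg z]

lemma moeb_mem {z u : ℂ} (hz : ‖z‖ < 1) (hu : ‖u‖ < 1) : ‖moeb z u‖ < 1 := by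
  have h := one_sub_normSq_moeb hz hu
  have h1 := norm_pos_iff.mpr (one_sub_conj_mul_ne_zero hz hu)
  have h2 := one_sub_sq_pos hz
  have h3 := one_sub_sq_pos hu
  have : 0 < 1 - ‖moeb z u‖ ^ 2 := by rw [h]; positivity
  nlinarith [norm_nonneg (moeb z u)]

lemma moeb_moeb {z u : ℂ} (hz : ‖z‖ < 1) (hu : ‖u‖ < 1) : moeb z (moeb z u) = u := by
  have h := one_sub_conj_mul_ne_zero hz hu
  have h1 := one_sub_conj_mul_moeb hz hu
  have h2 : (starRingEnd ℂ) z * z = ((‖z‖ ^ 2 : ℝ) : ℂ) := by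
    rw [Complex.conj_mul']; push_cast; rfl
  have h3 : ((1 - ‖z‖ ^ 2 : ℝ) : ℂ) ≠ 0 := by
    exact_mod_cast (one_sub_sq_pos hz).ne'
  have h4 : z - moeb z u = u * (1 - (starRingEnd ℂ) z * moeb z u) := by
    rw [h1, moeb, ← mul_div_assoc, eq_div_iff h, sub_mul, div_mul_cancel₀ _ h]
    push_cast at h2 ⊢
    linear_combination -u * h2
  rw [moeb, h4, mul_div_assoc, div_self, mul_one]
  rw [h1]
  exact div_ne_zero h3 h

lemma hasDerivAt_moeb {z u : ℂ} (hz : ‖z‖ < 1) (hu : ‖u‖ < 1) :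
    HasDerivAt (moeb z) (-((1 - ‖z‖ ^ 2 : ℝ) : ℂ) / (1 - (starRingEnd ℂ) z * u) ^ 2) u := by
  have h := one_sub_conj_mul_ne_zero hz hu
  have h1 : HasDerivAt (fun u : ℂ => z - u) (-1) u := by
    simpa using (hasDerivAt_id u).const_sub z
  have h2 : HasDerivAt (fun u : ℂ => 1 - (starRingEnd ℂ) z * u) (-(starRingEnd ℂ) z) u := by
    simpa using ((hasDerivAt_id u).const_mul ((starRingEnd ℂ) z)).const_sub 1
  refine (h1.div h2 h).congr_deriv ?_
  have h3 : (starRingEnd ℂ) z * z = ((‖z‖ ^ 2 : ℝ) : ℂ) := by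
    rw [Complex.conj_mul']; push_cast; rfl
  congr 1
  push_cast at h3 ⊢
  linear_combination h3

lemma integrableOn_weight {a : ℝ} (ha : -1 < a) :
    IntegrableOn (fun w : ℂ => (1 - ‖w‖ ^ 2) ^ a) (ball 0 1) := by
  have := (integrableOn_fun_norm_addHaar (E := ℂ) volume
    (f := fun y : ℝ => (1 - y ^ 2) ^ a) (r := 1)).2
  refine this ?_
  have h := intervalIntegral.integrableOn_deriv_of_nonneg (a := 0) (b := 1)
    (g := fun y : ℝ => -(1 - y ^ 2) ^ (a + 1) / (2 * (a + 1)))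
    (g' := fun y : ℝ => y * (1 - y ^ 2) ^ a) ?_ ?_ ?_
  · rw [Complex.finrank_real_complex]
    simpa using h.mono_set Ioo_subset_Ioc_self
  · refine ContinuousOn.div_const (ContinuousOn.neg ?_) _
    refine ContinuousOn.rpow_const (by fun_prop) fun x hx => Or.inr (by linarith)
  · intro y hy
    have h0 : 0 < 1 - y ^ 2 := by nlinarith [hy.1, hy.2]
    have h1 : HasDerivAt (fun y : ℝ => 1 - y ^ 2) (-(2 * y)) y := by
      simpa using (hasDerivAt_pow 2 y).const_sub 1
    have h2 := ((h1.rpow_const (p := a + 1) (Or.inl h0.ne')).neg).div_const (2 * (a + 1))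
    refine h2.congr_deriv ?_
    have : a + 1 ≠ 0 := by linarith
    rw [add_sub_cancel_right]
    field_simp
  · intro y hy
    have h0 : 0 < 1 - y ^ 2 := by nlinarith [hy.1, hy.2]
    have := hy.1
    positivity

/-- Forelli–Rudin estimate for large exponents. Substituting `w = moeb z u` produces the factor
`‖1 - z̄ u‖ ^ (s - 4 - 2 * a)`, whose exponent is nonnegative by `hs`, so it is at most a power
of `2` and only the integrability of the weight is needed. -/
lemma forelli_rudin {a s : ℝ} (ha : -1 < a) (hs : 4 + 2 * a ≤ s) :
    ∃ C : ℝ, 0 ≤ C ∧ ∀ z ∈ ball (0 : ℂ) 1,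
      ∫⁻ w in ball (0 : ℂ) 1,
        ENNReal.ofReal (‖1 - (starRingEnd ℂ) z * w‖ ^ (-s) * stdW a w) ∂dA ≤
      ENNReal.ofReal (C * (1 - ‖z‖ ^ 2) ^ (a + 2 - s)) := by
  set J : ℝ≥0∞ := ∫⁻ w in ball (0 : ℂ) 1, ENNReal.ofReal ((1 - ‖w‖ ^ 2) ^ a) with hJ
  have hJtop : J ≠ ∞ := by
    have h := integrableOn_weight ha
    have := h.lintegral_lt_top
    exact this.ne
  refine ⟨(Real.pi)⁻¹ * ((1 + a) * 2 ^ (s - 4 - 2 * a) * J.toReal), ?_, ?_⟩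
  · have := Real.pi_pos
    have : 0 < 1 + a := by linarith
    positivity
  intro z hz
  have hz' : ‖z‖ < 1 := by simpa using hz
  have hD := one_sub_sq_pos hz'
  have himg : moeb z '' ball 0 1 = ball 0 1 := by
    ext w
    constructor
    · rintro ⟨u, hu, rfl⟩
      simpa using moeb_mem hz' (by simpa using hu)
    · intro hw
      have hw' : ‖w‖ < 1 := by simpa using hw
      exact ⟨moeb z w, by simpa using moeb_mem hz' hw', moeb_moeb hz' hw'⟩
  have hinj : InjOn (moeb z) (ball 0 1) := by
    intro u hu v hv huv
    rw [← moeb_moeb hz' (u := u) (by simpa using hu), huv, moeb_moeb hz' (by simpa using hv)]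
  have hcv := lintegral_image_eq_lintegral_abs_det_fderiv_mul volume
    (f := moeb z) (s := ball (0 : ℂ) 1)
    (f' := fun u => (ContinuousLinearMap.toSpanSingleton ℂ
      (-((1 - ‖z‖ ^ 2 : ℝ) : ℂ) / (1 - (starRingEnd ℂ) z * u) ^ 2)).restrictScalars ℝ)
    measurableSet_ball
    (fun u hu => ((hasDerivAt_moeb hz' (by simpa using hu)).hasFDerivAt.restrictScalars
      ℝ).hasFDerivWithinAt) hinj
    (fun w => ENNReal.ofReal (‖1 - (starRingEnd ℂ) z * w‖ ^ (-s) * stdW a w))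
  rw [himg] at hcv
  rw [dA, Measure.restrict_smul, lintegral_smul_measure, hcv, smul_eq_mul, mul_assoc,
    ENNReal.ofReal_mul (by have := Real.pi_pos; positivity),
    ENNReal.ofReal_inv_of_pos Real.pi_pos]
  gcongr
  have hle : ∀ u ∈ ball (0 : ℂ) 1, ENNReal.ofReal |((ContinuousLinearMap.toSpanSingleton ℂ
      (-((1 - ‖z‖ ^ 2 : ℝ) : ℂ) / (1 - (starRingEnd ℂ) z * u) ^ 2)).restrictScalars ℝ).det| *
      ENNReal.ofReal (‖1 - (starRingEnd ℂ) z * moeb z u‖ ^ (-s) * stdW a (moeb z u)) ≤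
      ENNReal.ofReal ((1 + a) * 2 ^ (s - 4 - 2 * a) * (1 - ‖z‖ ^ 2) ^ (a + 2 - s)) *
        ENNReal.ofReal ((1 - ‖u‖ ^ 2) ^ a) := by
    intro u hu
    have hu' : ‖u‖ < 1 := by simpa using hu
    have hU := one_sub_sq_pos hu'
    have hq := norm_pos_iff.mpr (one_sub_conj_mul_ne_zero hz' hu')
    have hq2 : ‖1 - (starRingEnd ℂ) z * u‖ ≤ 2 := by
      refine (norm_sub_le _ _).trans ?_
      rw [norm_one, norm_mul, RCLike.norm_conj]
      nlinarith [norm_nonneg z, norm_nonneg u]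
    have hdet : |((ContinuousLinearMap.toSpanSingleton ℂ
      (-((1 - ‖z‖ ^ 2 : ℝ) : ℂ) / (1 - (starRingEnd ℂ) z * u) ^ 2)).restrictScalars ℝ).det| =
      (1 - ‖z‖ ^ 2) ^ (2 : ℝ) * ‖1 - (starRingEnd ℂ) z * u‖ ^ (-4 : ℝ) := by
      simp [ContinuousLinearMap.det, LinearMap.det_restrictScalars, Algebra.norm_complex_eq,
        Complex.normSq_eq_norm_sq]
      have hn : ‖((‖z‖ : ℂ) ^ 2 - 1)‖ = 1 - ‖z‖ ^ 2 := by
        rw [norm_sub_rev, show (1 : ℂ) - (‖z‖ : ℂ) ^ 2 = ((1 - ‖z‖ ^ 2 : ℝ) : ℂ) by push_cast; rfl,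
          Complex.norm_real, Real.norm_of_nonneg hD.le]
      rw [hn, abs_of_nonneg (by positivity), div_eq_mul_inv, ← pow_mul]
    rw [hdet, one_sub_conj_mul_moeb hz' hu', stdW, one_sub_normSq_moeb hz' hu', norm_div,
      Complex.norm_real, Real.norm_of_nonneg hD.le,
      ← ENNReal.ofReal_mul (by positivity), ← ENNReal.ofReal_mul (by
        have : 0 < 1 + a := by linarith
        positivity)]
    refine ENNReal.ofReal_le_ofReal ?_
    set q := ‖1 - (starRingEnd ℂ) z * u‖
    set D := 1 - ‖z‖ ^ 2
    set U := 1 - ‖u‖ ^ 2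
    have h1a : 0 < 1 + a := by linarith
    calc D ^ (2 : ℝ) * q ^ (-4 : ℝ) * ((D / q) ^ (-s) * ((1 + a) * (D * U / q ^ 2) ^ a))
        = (1 + a) * q ^ (s - 4 - 2 * a) * D ^ (a + 2 - s) * U ^ a := by
          rw [Real.div_rpow hD.le hq.le, Real.div_rpow (by positivity) (by positivity),
            Real.mul_rpow hD.le hU.le, ← Real.rpow_natCast q 2, ← Real.rpow_mul hq.le,
            show s - 4 - 2 * a = -4 + s + -(2 * a) by ring, Real.rpow_add hq, Real.rpow_add hq,
            show a + 2 - s = a + 2 + -s by ring, Real.rpow_add hD, Real.rpow_add hD,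
            Real.rpow_neg hq.le (2 * a), Real.rpow_neg hq.le s]
          push_cast
          have := (Real.rpow_pos_of_pos hq s).ne'
          field_simp
      _ ≤ _ := by
          gcongr
          linarith
  refine (setLIntegral_mono' measurableSet_ball hle).trans ?_
  rw [lintegral_const_mul' _ _ ENNReal.ofReal_ne_top, ← hJ]
  nth_rewrite 1 [← ENNReal.ofReal_toReal hJtop]
  have h1a : 0 < 1 + a := by linarith
  rw [← ENNReal.ofReal_mul (by positivity)]
  refine ENNReal.ofReal_le_ofReal (le_of_eq ?_)
  ring

/-! ### Polynomial approximation of kernel powers -/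

/-- The function `w ↦ (1 - z̄ w) ^ (-c)` is holomorphic on a disk of radius larger than `1`, so its
Taylor polynomials at `0` converge to it uniformly on the unit disk. -/
lemma exists_polynomial_approx (c : ℝ) {z : ℂ} (hz : ‖z‖ < 1) {ε : ℝ} (hε : 0 < ε) :
    ∃ Q : Polynomial ℂ, ∀ w ∈ ball (0 : ℂ) 1,
      ‖Q.eval w - (1 - (starRingEnd ℂ) z * w) ^ (-(c : ℂ))‖ < ε := by
  have hz0 := norm_nonneg z
  have hR0 : (0 : ℝ) < 2 / (1 + ‖z‖) := by positivity
  set R : ℝ≥0 := ⟨2 / (1 + ‖z‖), hR0.le⟩ with hR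
  have hRv : (R : ℝ) = 2 / (1 + ‖z‖) := rfl
  have hR1 : 1 < R := by
    rw [← NNReal.coe_lt_coe, hRv, NNReal.coe_one, lt_div_iff₀ (by positivity)]
    linarith
  have hdiff : DifferentiableOn ℂ (fun w => (1 - (starRingEnd ℂ) z * w) ^ (-(c : ℂ)))
      (closedBall 0 R) := by
    intro w hw
    have hw' : ‖w‖ ≤ 2 / (1 + ‖z‖) := by simpa [← hRv] using hw
    refine DifferentiableAt.differentiableWithinAt ?_
    refine DifferentiableAt.cpow_const (by fun_prop) (Or.inl ?_)
    have h1 : ((starRingEnd ℂ) z * w).re ≤ ‖z‖ * ‖w‖ := by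
      simpa using Complex.re_le_norm ((starRingEnd ℂ) z * w)
    have h2 : ‖z‖ * ‖w‖ ≤ ‖z‖ * (2 / (1 + ‖z‖)) := by gcongr
    have h3 : ‖z‖ * (2 / (1 + ‖z‖)) < 1 := by
      rw [← mul_div_assoc, div_lt_one (by positivity)]
      linarith
    simp only [sub_re, one_re]
    linarith
  have hps := hdiff.hasFPowerSeriesOnBall (lt_trans one_pos hR1)
  have hu := hps.tendstoUniformlyOn' (r' := 1) (by exact_mod_cast hR1)
  rw [Metric.tendstoUniformlyOn_iff] at hu
  obtain ⟨n, hn⟩ := (hu ε hε).exists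
  refine ⟨∑ k ∈ Finset.range n, Polynomial.monomial k
    ((cauchyPowerSeries (fun w => (1 - (starRingEnd ℂ) z * w) ^ (-(c : ℂ))) 0 R).coeff k), ?_⟩
  intro w hw
  have := hn w (by simpa using hw)
  rw [dist_comm, dist_eq_norm] at this
  refine lt_of_eq_of_lt ?_ this
  congr 2
  simp [FormalMultilinearSeries.partialSum, Polynomial.eval_finsetSum, mul_comm]

/-! ### The positive kernel integral -/

lemma norm_one_sub_conj (z w : ℂ) :
    ‖1 - z * (starRingEnd ℂ) w‖ = ‖1 - (starRingEnd ℂ) z * w‖ := by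
  rw [← RCLike.norm_conj (1 - z * (starRingEnd ℂ) w)]
  simp

/-- The kernel and its conjugate multiply to a positive real power of the modulus; positivity of
the real part of `1 - z w̄` keeps the principal branch away from its cut. -/
lemma kernel_mul_conj_kernel (c : ℝ) {z w : ℂ} (hz : ‖z‖ < 1) (hw : ‖w‖ < 1) :
    (1 - (starRingEnd ℂ) z * w) ^ (-(c : ℂ)) * (1 - z * (starRingEnd ℂ) w) ^ (-(c : ℂ)) =
      ((‖1 - z * (starRingEnd ℂ) w‖ ^ (-(2 * c)) : ℝ) : ℂ) := by
  have hre := one_sub_mul_conj_re_pos hz.le hw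
  have harg : (1 - z * (starRingEnd ℂ) w).arg ≠ Real.pi :=
    Complex.slitPlane_arg_ne_pi (Or.inl hre)
  have hne : 1 - z * (starRingEnd ℂ) w ≠ 0 := by
    intro h
    rw [h] at hre
    simp at hre
  have h1 : (1 - (starRingEnd ℂ) z * w) = (starRingEnd ℂ) (1 - z * (starRingEnd ℂ) w) := by simp
  have h2 : (starRingEnd ℂ) (-(c : ℂ)) = -(c : ℂ) := by simp
  rw [h1, Complex.conj_cpow _ _ harg, h2, Complex.conj_mul', ← Complex.ofReal_neg,
    Complex.norm_cpow_real, ← Complex.ofReal_pow, ← Real.rpow_natCast, ← Real.rpow_mul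
    (norm_nonneg _)]
  congr 2
  push_cast
  ring

lemma toep_eq (μ : Measure ℂ) (b : ℝ) (f : ℂ → ℂ) :
    Toep μ b f = fun ζ => ∫ w in ball (0 : ℂ) 1,
      f w * (1 - ζ * (starRingEnd ℂ) w) ^ (-((2 + b : ℝ) : ℂ)) ∂μ := by
  funext ζ
  rw [Toep]
  congr 1
  funext w
  rw [Complex.cpow_neg, div_eq_mul_inv]

/-- Quasi-norm bound for a test function dominated by twice the modulus of
`(1 - z̄ w) ^ (-c)`, given the Forelli–Rudin bound at exponent `c * p`. -/
lemma wnorm_le_of_le {p a c C : ℝ} (hp : 0 < p) (hC : 0 ≤ C) {z : ℂ} (hz : ‖z‖ < 1)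
    (ha : -1 < a)
    (hFR : ∫⁻ w in ball (0 : ℂ) 1,
        ENNReal.ofReal (‖1 - (starRingEnd ℂ) z * w‖ ^ (-(c * p)) * stdW a w) ∂dA ≤
      ENNReal.ofReal (C * (1 - ‖z‖ ^ 2) ^ (a + 2 - c * p))) {f : ℂ → ℂ}
    (hf : ∀ w ∈ ball (0 : ℂ) 1, ‖f w‖ ≤ 2 * ‖1 - (starRingEnd ℂ) z * w‖ ^ (-c)) :
    wnorm p a f ≤ ENNReal.ofReal (2 * C ^ (1 / p) * (1 - ‖z‖ ^ 2) ^ ((a + 2) / p - c)) := by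
  have hD := one_sub_sq_pos hz
  have h1 : ∫⁻ w in ball (0 : ℂ) 1, ENNReal.ofReal (‖f w‖ ^ p * stdW a w) ∂dA ≤
      ENNReal.ofReal (2 ^ p * (C * (1 - ‖z‖ ^ 2) ^ (a + 2 - c * p))) := by
    rw [ENNReal.ofReal_mul (by positivity)]
    refine le_trans ?_ (mul_le_mul_right hFR _)
    rw [← lintegral_const_mul' _ _ ENNReal.ofReal_ne_top]
    refine setLIntegral_mono' measurableSet_ball fun w hw => ?_
    rw [← ENNReal.ofReal_mul (by positivity)]
    refine ENNReal.ofReal_le_ofReal ?_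
    have hw' : ‖w‖ < 1 := by simpa using hw
    have hS : 0 ≤ stdW a w := by
      have := one_sub_sq_pos hw'
      have : 0 < 1 + a := by linarith
      rw [stdW]; positivity
    rw [← mul_assoc]
    gcongr
    calc ‖f w‖ ^ p ≤ (2 * ‖1 - (starRingEnd ℂ) z * w‖ ^ (-c)) ^ p :=
          Real.rpow_le_rpow (norm_nonneg _) (hf w hw) hp.le
      _ = _ := by
          rw [Real.mul_rpow (by norm_num) (by positivity), ← Real.rpow_mul (norm_nonneg _), neg_mul]
  rw [wnorm]
  refine (ENNReal.rpow_le_rpow h1 (by positivity)).trans (le_of_eq ?_)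
  rw [ENNReal.ofReal_rpow_of_nonneg (by positivity) (by positivity)]
  congr 1
  rw [Real.mul_rpow (by positivity) (by positivity), Real.mul_rpow hC (by positivity),
    ← Real.rpow_mul (by norm_num), ← Real.rpow_mul hD.le, mul_one_div_cancel hp.ne', Real.rpow_one,
    mul_assoc]
  congr 3
  field_simp

/-- Testing the boundedness of the Toeplitz operator on approximations of
`w ^ m * (1 - z̄ w) ^ (-c)`, `c = 2 + b + m`, controls a positive integral against `μ`. -/
lemma kernel_integral_bound {p a b : ℝ} (hp : 0 < p) (ha : -1 < a) (hb : -1 < b)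
    (μ : Measure ℂ) [IsFiniteMeasure μ]
    (hbdd : ∃ C : ℝ≥0, ∀ P : Polynomial ℂ,
      wnorm 1 b (Toep μ b fun z => P.eval z) ≤ C * wnorm p a fun z => P.eval z) {m : ℕ}
    (hm : 4 + 2 * a ≤ (2 + b + m) * p) :
    ∃ K : ℝ, 0 ≤ K ∧ ∀ z ∈ ball (0 : ℂ) 1,
      ∫ w in ball (0 : ℂ) 1,
        ‖w‖ ^ (2 * m) * ‖1 - z * (starRingEnd ℂ) w‖ ^ (-(2 * (2 + b + m))) ∂μ ≤
      K * (1 - ‖z‖ ^ 2) ^ ((a + 2) / p - 2 * (2 + b + m)) := by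
  obtain ⟨C0, hC0⟩ := hbdd
  obtain ⟨C1, hC1, h1⟩ := iteratedDeriv_le_wnorm hb m
  obtain ⟨C2, hC2, h2⟩ := forelli_rudin ha hm
  have hs0 : 0 ≤ 2 + b := by linarith
  set A : ℝ := ∏ i ∈ Finset.range m, (2 + b + (i : ℝ)) with hA
  have hA0 : 0 < A := Finset.prod_pos fun i _ => by
    have : (0 : ℝ) ≤ i := Nat.cast_nonneg i
    linarith
  set c : ℝ := 2 + b + m with hc
  have hc0 : 0 ≤ c := by positivity
  refine ⟨C1 * C0 * (2 * C2 ^ (1 / p)) / A, by positivity, ?_⟩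
  intro z hz
  have hz' : ‖z‖ < 1 := by simpa using hz
  have hD := one_sub_sq_pos hz'
  set D := 1 - ‖z‖ ^ 2 with hDdef
  set J := ∫ w in ball (0 : ℂ) 1,
        ‖w‖ ^ (2 * m) * ‖1 - z * (starRingEnd ℂ) w‖ ^ (-(2 * c)) ∂μ with hJ
  set B : ℝ := (1 - ‖z‖) ^ (-c) with hB
  have hB0 : 0 < B := Real.rpow_pos_of_pos (by linarith) _
  set M : ℝ := B * (μ.restrict (ball 0 1)).real univ with hM
  have hker : ∀ w : ℂ, ‖w‖ < 1 → ‖1 - (starRingEnd ℂ) z * w‖ ^ (-c) ≤ B := by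
    intro w hw
    rw [← norm_one_sub_conj]
    exact Real.rpow_le_rpow_of_nonpos (by linarith) (one_sub_norm_le hw.le) (by linarith)
  have hker2 : ∀ w : ℂ, ‖w‖ < 1 → (2 : ℝ) ^ (-c) ≤ ‖1 - (starRingEnd ℂ) z * w‖ ^ (-c) := by
    intro w hw
    refine Real.rpow_le_rpow_of_nonpos
      (norm_pos_iff.mpr (one_sub_conj_mul_ne_zero hz' hw)) ?_ (by linarith)
    refine (norm_sub_le _ _).trans ?_
    rw [norm_one, norm_mul, RCLike.norm_conj]
    nlinarith [norm_nonneg z, norm_nonneg w]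
  have hnormg : ∀ w : ℂ, ‖(1 - (starRingEnd ℂ) z * w) ^ (-(c : ℂ))‖ =
      ‖1 - (starRingEnd ℂ) z * w‖ ^ (-c) := by
    intro w
    rw [← Complex.ofReal_neg, Complex.norm_cpow_real]
  -- `M` bounds the error per unit `ε` of uniform approximation; the condition `ε ≤ 2 ^ (-c)` puts
  -- `ε` below the modulus of the kernel power, so that its approximant is at most twice as large.
  have hmain : ∀ ε : ℝ, 0 < ε → ε ≤ 2 ^ (-c) →
      J ≤ C1 * C0 * (2 * C2 ^ (1 / p)) / A * D ^ ((a + 2) / p - 2 * c) + ε * M := by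
    intro ε hε hεc
    obtain ⟨Q, hQ⟩ := exists_polynomial_approx c hz' hε
    have hQb : ∀ w ∈ ball (0 : ℂ) 1, ‖Q.eval w‖ ≤ 2 * ‖1 - (starRingEnd ℂ) z * w‖ ^ (-c) := by
      intro w hw
      have e1 := hQ w hw
      have e2 := norm_sub_norm_le (Q.eval w) ((1 - (starRingEnd ℂ) z * w) ^ (-(c : ℂ)))
      rw [hnormg] at e2
      have e3 := hker2 w (by simpa using hw)
      linarith
    set P : Polynomial ℂ := Polynomial.X ^ m * Q with hP
    have hPe : ∀ w, P.eval w = w ^ m * Q.eval w := by intro w; simp [hP]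
    have hPb : ∀ w ∈ ball (0 : ℂ) 1, ‖P.eval w‖ ≤ 2 * ‖1 - (starRingEnd ℂ) z * w‖ ^ (-c) := by
      intro w hw
      have hw' : ‖w‖ < 1 := by simpa using hw
      rw [hPe, norm_mul, norm_pow]
      exact (mul_le_of_le_one_left (norm_nonneg _)
        (pow_le_one₀ (norm_nonneg _) hw'.le)).trans (hQb w hw)
    have hPm : Measurable fun w => P.eval w := P.continuous.measurable
    have hPM : ∀ w ∈ ball (0 : ℂ) 1, ‖P.eval w‖ ≤ 2 * B := fun w hw =>
      (hPb w hw).trans (by have := hker w (by simpa using hw); linarith)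
    have hdiff : DifferentiableOn ℂ (Toep μ b fun w => P.eval w) (ball 0 1) := by
      rw [toep_eq]
      intro ζ hζ
      exact (hasDerivAt_integral_kernel μ hPm hPM hs0
        (by simpa using hζ)).differentiableAt.differentiableWithinAt
    have hT := h1 _ hdiff z hz
    set S : ℂ := ∫ w in ball (0 : ℂ) 1, (P.eval w * (starRingEnd ℂ) w ^ m) *
      (1 - z * (starRingEnd ℂ) w) ^ (-(c : ℂ)) ∂μ with hS
    have hder : iteratedDeriv m (Toep μ b fun w => P.eval w) z = (A : ℂ) * S := by
      rw [toep_eq, iteratedDeriv_integral_kernel μ hPm hPM hs0 m hz']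
    have hSJ : ‖S - (J : ℂ)‖ ≤ ε * B * (μ.restrict (ball 0 1)).real univ := by
      have hJc : (J : ℂ) = ∫ w in ball (0 : ℂ) 1,
          (w ^ m * (1 - (starRingEnd ℂ) z * w) ^ (-(c : ℂ)) * (starRingEnd ℂ) w ^ m) *
          (1 - z * (starRingEnd ℂ) w) ^ (-(c : ℂ)) ∂μ := by
        rw [hJ, ← integral_complex_ofReal]
        refine setIntegral_congr_fun measurableSet_ball fun w hw => ?_
        have hk := kernel_mul_conj_kernel c hz' (w := w) (by simpa using hw)
        have hww : w ^ m * (starRingEnd ℂ) w ^ m = ((‖w‖ ^ (2 * m) : ℝ) : ℂ) := by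
          rw [← mul_pow, Complex.mul_conj', pow_mul]
          push_cast
          rfl
        push_cast at hk hww ⊢
        rw [← hk, ← hww]
        ring
      have i1 := integrable_kernel μ (h := fun w => P.eval w * (starRingEnd ℂ) w ^ m)
        (hPm.mul (Complex.continuous_conj.measurable.pow_const _)) (M := 2 * B)
        (fun w hw => by
          have hw' : ‖w‖ < 1 := by simpa using hw
          rw [norm_mul, norm_pow, RCLike.norm_conj]
          exact (mul_le_of_le_one_right (norm_nonneg _)
            (pow_le_one₀ (norm_nonneg _) hw'.le)).trans (hPM w hw)) hc0 hz'
      have hgm : Measurable fun w : ℂ => (1 - (starRingEnd ℂ) z * w) ^ (-(c : ℂ)) := by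
        have : Continuous fun w : ℂ => 1 - (starRingEnd ℂ) z * w := by fun_prop
        exact this.measurable.pow_const _
      have i2 := integrable_kernel μ (h := fun w => w ^ m *
          (1 - (starRingEnd ℂ) z * w) ^ (-(c : ℂ)) * (starRingEnd ℂ) w ^ m)
        (((measurable_id.pow_const _).mul hgm).mul
          (Complex.continuous_conj.measurable.pow_const _)) (M := B)
        (fun w hw => by
          have hw' : ‖w‖ < 1 := by simpa using hw
          rw [norm_mul, norm_mul, norm_pow, norm_pow, RCLike.norm_conj, hnormg]
          have e1 := pow_le_one₀ (n := m) (norm_nonneg w) hw'.le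
          calc _ ≤ 1 * B * 1 := by gcongr; exact hker w hw'
            _ = B := by ring) hc0 hz'
      rw [hJc, hS, ← integral_sub i1 i2]
      refine norm_integral_le_of_norm_le_const ?_
      filter_upwards [ae_restrict_mem measurableSet_ball] with w hw
      have hw' : ‖w‖ < 1 := by simpa using hw
      have e1 := pow_le_one₀ (n := m) (norm_nonneg w) hw'.le
      have e2 := (hQ w hw).le
      have e3 := hker w hw'
      have e4 : ‖(1 - z * (starRingEnd ℂ) w) ^ (-(c : ℂ))‖ ≤ B := by
        rw [← Complex.ofReal_neg, Complex.norm_cpow_real, norm_one_sub_conj]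
        exact e3
      calc _ = ‖w ^ m * (Q.eval w - (1 - (starRingEnd ℂ) z * w) ^ (-(c : ℂ))) *
            (starRingEnd ℂ) w ^ m * (1 - z * (starRingEnd ℂ) w) ^ (-(c : ℂ))‖ := by
            rw [hPe]; congr 1; ring
        _ = ‖w‖ ^ m * ‖Q.eval w - (1 - (starRingEnd ℂ) z * w) ^ (-(c : ℂ))‖ * ‖w‖ ^ m *
            ‖(1 - z * (starRingEnd ℂ) w) ^ (-(c : ℂ))‖ := by
            rw [norm_mul, norm_mul, norm_mul, norm_pow, norm_pow, RCLike.norm_conj]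
        _ ≤ 1 * ε * 1 * B := by gcongr
        _ = ε * B := by ring
    have hSle : A * ‖S‖ ≤ C1 * D ^ (-c) *
        (C0 * (2 * C2 ^ (1 / p) * D ^ ((a + 2) / p - c))) := by
      have e := hT.trans (mul_le_mul_right ((hC0 P).trans (mul_le_mul_right
        (wnorm_le_of_le hp hC2 hz' ha (h2 z hz) hPb) _)) _)
      rw [hder, ← ofReal_norm, norm_mul, Complex.norm_real, Real.norm_of_nonneg hA0.le,
        ← ENNReal.ofReal_coe_nnreal, ← ENNReal.ofReal_mul (by positivity),
        ← ENNReal.ofReal_mul (by positivity)] at e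
      exact (ENNReal.ofReal_le_ofReal_iff (by positivity)).1 e
    have hDD : D ^ (-c) * D ^ ((a + 2) / p - c) = D ^ ((a + 2) / p - 2 * c) := by
      rw [← Real.rpow_add hD]; congr 1; ring
    have hS2 : ‖S‖ ≤ C1 * C0 * (2 * C2 ^ (1 / p)) / A * D ^ ((a + 2) / p - 2 * c) := by
      rw [div_mul_eq_mul_div, le_div_iff₀ hA0, ← hDD, mul_comm]
      refine hSle.trans (le_of_eq ?_)
      ring
    have hJS : J ≤ ‖S‖ + ‖S - (J : ℂ)‖ := by
      have e1 : ‖(J : ℂ)‖ ≤ ‖S‖ + ‖S - (J : ℂ)‖ := by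
        have := norm_sub_le S (S - (J : ℂ))
        rwa [sub_sub_cancel] at this
      rw [Complex.norm_real] at e1
      exact (le_abs_self J).trans e1
    rw [hM]
    linarith
  have hM0 : 0 ≤ M := by positivity
  refine le_of_forall_pos_le_add fun η hη => ?_
  have h2c : (0 : ℝ) < 2 ^ (-c) := by positivity
  set ε := min (2 ^ (-c)) (η / (M + 1)) with hε
  have hε0 : 0 < ε := lt_min h2c (by positivity)
  refine (hmain ε hε0 (min_le_left _ _)).trans ?_
  have : ε * M ≤ η := by
    calc ε * M ≤ η / (M + 1) * (M + 1) := by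
          gcongr
          · exact min_le_right _ _
          · linarith
      _ = η := by field_simp
  linarith

/-! ### The Carleson condition -/

theorem stmt4 (p a b : ℝ) (hp0 : 0 < p) (hp1 : p ≤ 1) (ha : -1 < a) (hb : -1 < b)
    (μ : Measure ℂ) [IsFiniteMeasure μ]
    (hbdd : ∃ C : ℝ≥0, ∀ P : Polynomial ℂ,
      wnorm 1 b (Toep μ b fun z => P.eval z) ≤ C * wnorm p a fun z => P.eval z) :
    ∀ r ∈ Set.Ioo (0 : ℝ) 1, ∃ C : ℝ, ∀ z ∈ ball (0 : ℂ) 1,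
      μ (pD z r) ≤ ENNReal.ofReal (C * (1 - ‖z‖ ^ 2) ^ ((a + 2) / p)) := by
  -- `m` is large enough for the Forelli–Rudin estimate to apply with exponent `(2 + b + m) * p`.
  obtain ⟨m, hm⟩ := exists_nat_ge ((4 + 2 * a) / p)
  have hm' : 4 + 2 * a ≤ (2 + b + m) * p := by
    rw [div_le_iff₀ hp0] at hm
    nlinarith
  obtain ⟨K, hK0, hK⟩ := kernel_integral_bound hp0 ha hb μ hbdd hm'
  intro r hr
  obtain ⟨hr0, hr1⟩ := hr
  set c : ℝ := 2 + b + m with hc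
  have hc0 : 0 < c := by have : (0 : ℝ) ≤ m := Nat.cast_nonneg m; rw [hc]; linarith
  set γ : ℝ := (a + 2) / p with hγ
  have hγ0 : 0 < γ := div_pos (by linarith) hp0
  have h1r : 0 < 1 - r := by linarith
  -- If `1 - ‖z‖ ^ 2 ≤ δ` then every `w` in `D(z, r)` has `‖w‖ ≥ 1 / 2`, so `‖w‖ ^ (2 * m)` is
  -- bounded below there. For the remaining `z` finiteness of `μ` suffices.
  set δ : ℝ := (1 - r) / 4 with hδ
  have hδ0 : 0 < δ := by positivity
  refine ⟨K * 4 ^ m * (1 - r) ^ (-(2 * c)) + μ.real univ * δ ^ (-γ), fun z hz => ?_⟩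
  have hz' : ‖z‖ < 1 := by simpa using hz
  have hD := one_sub_sq_pos hz'
  set D := 1 - ‖z‖ ^ 2 with hDdef
  rcases le_or_gt D δ with hDδ | hDδ
  · set h : ℂ → ℝ := fun w => ‖w‖ ^ (2 * m) * ‖1 - z * (starRingEnd ℂ) w‖ ^ (-(2 * c)) with hh
    set t : ℝ := (1 / 2) ^ (2 * m) * (D / (1 - r)) ^ (-(2 * c)) with ht
    have ht0 : 0 < t := by positivity
    have hhm : Measurable h := by
      have e1 : Measurable fun w : ℂ => ‖1 - z * (starRingEnd ℂ) w‖ := by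
        have : Continuous fun w : ℂ => ‖1 - z * (starRingEnd ℂ) w‖ := by fun_prop
        exact this.measurable
      exact (measurable_norm.pow_const _).mul (e1.pow_const _)
    have hint : Integrable h (μ.restrict (ball 0 1)) := by
      refine Integrable.of_bound hhm.aestronglyMeasurable ((1 - ‖z‖) ^ (-(2 * c))) ?_
      filter_upwards [ae_restrict_mem measurableSet_ball] with w hw
      have hw' : ‖w‖ < 1 := by simpa using hw
      rw [Real.norm_of_nonneg (by positivity)]
      calc _ ≤ 1 * (1 - ‖z‖) ^ (-(2 * c)) := by
            gcongr ?_ * ?_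
            · exact pow_le_one₀ (norm_nonneg w) hw'.le
            · exact Real.rpow_le_rpow_of_nonpos (by linarith) (one_sub_norm_le hw'.le)
                (by linarith)
        _ = _ := one_mul _
    have hmk := mul_meas_ge_le_integral_of_nonneg (μ := μ.restrict (ball 0 1)) (f := h)
      (Eventually.of_forall fun w => by simp only [hh, Pi.zero_apply]; positivity) hint t
    have hJ := hmk.trans (hK z hz)
    have hsub : pD z r ⊆ {w | t ≤ h w} ∩ ball 0 1 := by
      rintro w ⟨hw, hwr⟩
      have hw' : ‖w‖ < 1 := by simpa using hw
      refine ⟨?_, hw⟩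
      have hq := norm_pos_iff.mpr (one_sub_conj_mul_ne_zero hz' hw')
      change ‖moeb z w‖ < r at hwr
      have hmm := moeb_mem hz' hw'
      have e0 := one_sub_conj_mul_moeb hz' hmm
      -- Since `w = moeb z (moeb z w)`, `e0` expresses `1 - z̄ w` through `moeb z w`, whose
      -- modulus is less than `r`.
      rw [moeb_moeb hz' hw'] at e0
      have e1 : ‖1 - (starRingEnd ℂ) z * w‖ ≤ D / (1 - r) := by
        rw [e0, norm_div, Complex.norm_real, Real.norm_of_nonneg hD.le]
        gcongr
        have e2 := one_sub_norm_le (z := moeb z w) (w := z) hz'.le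
        rw [mul_comm (moeb z w)] at e2
        linarith
      have e3 : D / (1 - r) ≤ 1 / 4 := by
        rw [div_le_iff₀ h1r]; linarith
      have e4 : ‖z - w‖ ≤ 1 / 4 := by
        have : ‖z - w‖ = ‖moeb z w‖ * ‖1 - (starRingEnd ℂ) z * w‖ := by
          rw [moeb, norm_div, div_mul_cancel₀ _ hq.ne']
        rw [this]
        nlinarith [norm_nonneg (moeb z w)]
      have e5 : 3 / 4 ≤ ‖z‖ := by nlinarith [norm_nonneg z]
      have e6 : 1 / 2 ≤ ‖w‖ := by linarith [norm_sub_norm_le z w]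
      change t ≤ ‖w‖ ^ (2 * m) * ‖1 - z * (starRingEnd ℂ) w‖ ^ (-(2 * c))
      rw [norm_one_sub_conj, ht]
      gcongr ?_ * ?_
      · gcongr
      · exact Real.rpow_le_rpow_of_nonpos hq e1 (by linarith)
    calc μ (pD z r) ≤ μ ({w | t ≤ h w} ∩ ball 0 1) := measure_mono hsub
      _ = (μ.restrict (ball 0 1)) {w | t ≤ h w} :=
          (Measure.restrict_apply (measurableSet_le measurable_const hhm)).symm
      _ = ENNReal.ofReal ((μ.restrict (ball 0 1)).real {w | t ≤ h w}) := by
          rw [ofReal_measureReal]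
      _ ≤ _ := by
          refine ENNReal.ofReal_le_ofReal ?_
          have f1 : (μ.restrict (ball 0 1)).real {w | t ≤ h w} ≤ K * D ^ (γ - 2 * c) / t := by
            rw [le_div_iff₀ ht0, mul_comm]; exact hJ
          have f2 : K * D ^ (γ - 2 * c) / t = K * 4 ^ m * (1 - r) ^ (-(2 * c)) * D ^ γ := by
            rw [ht, Real.div_rpow hD.le h1r.le, sub_eq_add_neg, Real.rpow_add hD, pow_mul,
              div_pow, div_pow]
            have := (Real.rpow_pos_of_pos hD (-(2 * c))).ne'
            have := (Real.rpow_pos_of_pos h1r (-(2 * c))).ne'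
            norm_num
            field_simp
          have f3 : 0 ≤ μ.real univ * δ ^ (-γ) * D ^ γ := by positivity
          rw [add_mul]
          linarith
  · calc μ (pD z r) ≤ μ univ := measure_mono (subset_univ _)
      _ = ENNReal.ofReal (μ.real univ) := by rw [ofReal_measureReal]
      _ ≤ _ := by
          refine ENNReal.ofReal_le_ofReal ?_
          have f1 : δ ^ γ ≤ D ^ γ := Real.rpow_le_rpow hδ0.le hDδ.le hγ0.le
          have f2 : 1 ≤ δ ^ (-γ) * D ^ γ := by
            calc (1 : ℝ) = δ ^ (-γ) * δ ^ γ := by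
                  rw [← Real.rpow_add hδ0]; simp
              _ ≤ _ := by gcongr
          have f3 : 0 ≤ K * 4 ^ m * (1 - r) ^ (-(2 * c)) * D ^ γ := by positivity
          have f4 : 0 ≤ μ.real univ := measureReal_nonneg
          rw [add_mul, mul_assoc (μ.real univ)]
          nlinarith
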